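/- The left column of the states of Qin's algorithm is increasing and the right column is decreasing. Precisely: for every j with 2j + 2 ≤ n − 1, x₁₁⁽²ʲ⁾ = x₁₁⁽²ʲ⁺¹⁾ < x₁₁⁽²ʲ⁺²⁾ and x₁₂⁽²ʲ⁾ = x₁₂⁽²ʲ⁺¹⁾ > x₁₂⁽²ʲ⁺²⁾; and for every j with 2j + 1 ≤ n − 1, x₂₁⁽²ʲ⁾ < x₂₁⁽²ʲ⁺¹⁾ and x₂₂⁽²ʲ⁾ > x₂₂⁽²ʲ⁺¹⁾, while x₂₁⁽²ʲ⁺¹⁾ = x₂₁⁽²ʲ⁺²⁾ and x₂₂⁽²ʲ⁺¹⁾ = x₂₂⁽²ʲ⁺²⁾ whenever 2j + 2 ≤ n − 1. -/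

import Mathlib

/-!
Write `u = x₁₂`, `v = x₂₂` for the absolute values of the entries of the right column. The
recursion replaces `v` by `v - q u` at odd steps and `u` by `u - q v` at even steps, so the right
column runs the Euclidean algorithm on `(a, m)`. Hence `u / v` (after an even number of steps) or
`v / u` (after an odd number) is the tail `[0; q_{k+1}, …, q_n]` of the continued fraction
(`cfTail`). A nonempty tail with positive partial quotients is positive (`cfTail_pos`), so `u` and
`v` stay positive as long as `k < n` (`euclid_step`). The left column grows by positive multiples of
its own entries, starting from `(1, 0)`. Every claimed inequality is the positivity of such an
increment; the equalities hold since each step changes one row only.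
-/

/-- The value of the continued fraction `[0; q₁, …, qₙ]` where the list is `[q₁, …, qₙ]`. -/
def cfVal : List ℤ → ℚ
  | [] => 0
  | c :: rest => ((c : ℚ) + cfVal rest)⁻¹

/-- The tail `[0; q_{k+1}, …, q_{k+l}]` of the continued fraction with partial quotients `q`. -/
def cfTail (q : ℕ → ℤ) (k l : ℕ) : ℚ :=
  cfVal (List.ofFn fun i : Fin l => q (k + i.1 + 1))

theorem cfTail_succ (q : ℕ → ℤ) (k l : ℕ) :
    cfTail q k (l + 1) = ((q (k + 1) : ℚ) + cfTail q (k + 1) l)⁻¹ := by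
  unfold cfTail
  rw [List.ofFn_succ]
  have h : ∀ i : ℕ, k + (i + 1) + 1 = k + 1 + i + 1 := fun i => by ring
  simp [cfVal, h]

theorem cfTail_nonneg (q : ℕ → ℤ) (l : ℕ) :
    ∀ k, (∀ i, k + 1 ≤ i → i ≤ k + l → 0 < q i) → 0 ≤ cfTail q k l := by
  induction l with
  | zero => intro k _; simp [cfTail, cfVal]
  | succ l ih =>
    intro k h
    rw [cfTail_succ]
    have h1 : (0 : ℚ) < q (k + 1) := by exact_mod_cast h (k + 1) (by omega) (by omega)
    have h2 := ih (k + 1) fun i hi hi' => h i (by omega) (by omega)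
    positivity

theorem cfTail_pos (q : ℕ → ℤ) (k l : ℕ) (hl : 0 < l)
    (h : ∀ i, k + 1 ≤ i → i ≤ k + l → 0 < q i) : 0 < cfTail q k l := by
  obtain ⟨l, rfl⟩ := Nat.exists_eq_succ_of_ne_zero hl.ne'
  rw [Nat.succ_eq_add_one, cfTail_succ]
  have h1 : (0 : ℚ) < q (k + 1) := by exact_mod_cast h (k + 1) (by omega) (by omega)
  have h2 := cfTail_nonneg q l (k + 1) fun i hi hi' => h i (by omega) (by omega)
  positivity

/-- One Euclidean division step: if `u / v` is the tail after `k` steps and this is not the last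
step, then the remainder `v - q_{k+1} u` is positive and its ratio to `u` is the next tail. -/
theorem euclid_step (q : ℕ → ℤ) (n k : ℕ) (hk : k + 1 < n)
    (hq : ∀ k, 1 ≤ k → k ≤ n → 0 < q k) (u v : ℤ) (hu : 0 < u)
    (h : (u : ℚ) / v = cfTail q k (n - k)) :
    0 < v - q (k + 1) * u ∧
      ((v - q (k + 1) * u : ℤ) : ℚ) / u = cfTail q (k + 1) (n - (k + 1)) := by
  have hs := cfTail_pos q (k + 1) (n - (k + 1)) (by omega)
    fun i hi hi' => hq i (by omega) (by omega)
  rw [show n - k = n - (k + 1) + 1 by omega, cfTail_succ] at h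
  have hu' : (0 : ℚ) < u := by exact_mod_cast hu
  have h' : (v : ℚ) / u = q (k + 1) + cfTail q (k + 1) (n - (k + 1)) := by
    rw [← inv_inv (_ + _), ← h, inv_div]
  have hr : ((v - q (k + 1) * u : ℤ) : ℚ) / u = cfTail q (k + 1) (n - (k + 1)) := by
    push_cast
    rw [sub_div, h', mul_div_cancel_right₀ _ hu'.ne']
    ring
  refine ⟨?_, hr⟩
  rw [← hr, div_pos_iff_of_pos_right hu'] at hs
  exact_mod_cast hs

/-- the left column of the states of Qin's algorithm is increasing and the
right column is decreasing: for `2j + 2 ≤ n − 1`,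
`x₁₁⁽²ʲ⁾ = x₁₁⁽²ʲ⁺¹⁾ < x₁₁⁽²ʲ⁺²⁾` and `x₁₂⁽²ʲ⁾ = x₁₂⁽²ʲ⁺¹⁾ > x₁₂⁽²ʲ⁺²⁾`;
for `2j + 1 ≤ n − 1`, `x₂₁⁽²ʲ⁾ < x₂₁⁽²ʲ⁺¹⁾` and `x₂₂⁽²ʲ⁾ > x₂₂⁽²ʲ⁺¹⁾`;
and for `2j + 2 ≤ n − 1`, `x₂₁⁽²ʲ⁺¹⁾ = x₂₁⁽²ʲ⁺²⁾` and `x₂₂⁽²ʲ⁺¹⁾ = x₂₂⁽²ʲ⁺²⁾`.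
Recall `x₁₂⁽ᵏ⁾ = −(X k 0 1)`. -/
theorem qin_state_monotone (a m : ℤ) (ha : 1 < a) (ham : a < m) (hgcd : Int.gcd a m = 1)
    (n : ℕ) (q : ℕ → ℤ) (hq : ∀ k, 1 ≤ k → k ≤ n → 0 < q k)
    (hcf : (a : ℚ) / (m : ℚ) = cfVal (List.ofFn fun i : Fin n => q (i.1 + 1)))
    (X : ℕ → Matrix (Fin 2) (Fin 2) ℤ)
    (hX0 : X 0 = !![1, -a; 0, m])
    (hXodd : ∀ k, Odd k → X k = !![1, 0; q k, 1] * X (k - 1))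
    (hXeven : ∀ k, 0 < k → Even k → X k = !![1, q k; 0, 1] * X (k - 1)) :
    (∀ j, 2 * j + 2 ≤ n - 1 →
      X (2 * j) 0 0 = X (2 * j + 1) 0 0 ∧ X (2 * j + 1) 0 0 < X (2 * j + 2) 0 0 ∧
      -(X (2 * j) 0 1) = -(X (2 * j + 1) 0 1) ∧
      -(X (2 * j + 2) 0 1) < -(X (2 * j + 1) 0 1)) ∧
    (∀ j, 2 * j + 1 ≤ n - 1 →
      X (2 * j) 1 0 < X (2 * j + 1) 1 0 ∧ X (2 * j + 1) 1 1 < X (2 * j) 1 1) ∧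
    (∀ j, 2 * j + 2 ≤ n - 1 →
      X (2 * j + 1) 1 0 = X (2 * j + 2) 1 0 ∧ X (2 * j + 1) 1 1 = X (2 * j + 2) 1 1) := by
  -- The two recursions, entry by entry.
  have odd_step : ∀ j, X (2 * j + 1) 0 0 = X (2 * j) 0 0 ∧ X (2 * j + 1) 0 1 = X (2 * j) 0 1 ∧
      X (2 * j + 1) 1 0 = q (2 * j + 1) * X (2 * j) 0 0 + X (2 * j) 1 0 ∧
      X (2 * j + 1) 1 1 = q (2 * j + 1) * X (2 * j) 0 1 + X (2 * j) 1 1 := by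
    intro j
    rw [hXodd (2 * j + 1) ⟨j, rfl⟩]
    simp [Matrix.mul_apply, Fin.sum_univ_two]
  have even_step : ∀ j,
      X (2 * j + 2) 0 0 = X (2 * j + 1) 0 0 + q (2 * j + 2) * X (2 * j + 1) 1 0 ∧
      X (2 * j + 2) 0 1 = X (2 * j + 1) 0 1 + q (2 * j + 2) * X (2 * j + 1) 1 1 ∧
      X (2 * j + 2) 1 0 = X (2 * j + 1) 1 0 ∧ X (2 * j + 2) 1 1 = X (2 * j + 1) 1 1 := by
    intro j
    rw [hXeven (2 * j + 2) (by omega) ⟨j + 1, by ring⟩]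
    simp [Matrix.mul_apply, Fin.sum_univ_two]
  have to_odd : ∀ j, 2 * j + 1 < n →
      (0 < X (2 * j) 0 0 ∧ 0 ≤ X (2 * j) 1 0 ∧ 0 < -X (2 * j) 0 1 ∧ 0 < X (2 * j) 1 1 ∧
        ((-X (2 * j) 0 1 : ℤ) : ℚ) / (X (2 * j) 1 1 : ℤ) = cfTail q (2 * j) (n - 2 * j)) →
      0 < X (2 * j + 1) 0 0 ∧ 0 < X (2 * j + 1) 1 0 ∧ 0 < -X (2 * j + 1) 0 1 ∧
        0 < X (2 * j + 1) 1 1 ∧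
        ((X (2 * j + 1) 1 1 : ℤ) : ℚ) / ((-X (2 * j + 1) 0 1 : ℤ) : ℚ) =
          cfTail q (2 * j + 1) (n - (2 * j + 1)) := by
    rintro j hj ⟨h1, h2, h3, h4, h5⟩
    obtain ⟨e1, e2, e3, e4⟩ := odd_step j
    obtain ⟨s1, s2⟩ := euclid_step q n (2 * j) hj hq _ _ h3 h5
    have hqj := hq (2 * j + 1) (by omega) (by omega)
    have e : X (2 * j) 1 1 - q (2 * j + 1) * -X (2 * j) 0 1 = X (2 * j + 1) 1 1 := by
      rw [e4]; ring
    rw [e] at s1 s2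
    rw [e2]
    refine ⟨e1 ▸ h1, ?_, h3, s1, s2⟩
    rw [e3]; positivity
  have even_inv : ∀ j, 2 * j < n →
      0 < X (2 * j) 0 0 ∧ 0 ≤ X (2 * j) 1 0 ∧ 0 < -X (2 * j) 0 1 ∧ 0 < X (2 * j) 1 1 ∧
        ((-X (2 * j) 0 1 : ℤ) : ℚ) / (X (2 * j) 1 1 : ℤ) = cfTail q (2 * j) (n - 2 * j) := by
    intro j
    induction j with
    | zero =>
      intro _
      simp only [Nat.mul_zero, hX0]
      refine ⟨by simp, by simp, by simp; omega, by simp; omega, ?_⟩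
      simpa [cfTail] using hcf
    | succ j ih =>
      intro hj
      rw [show 2 * (j + 1) = 2 * j + 2 by ring] at hj ⊢
      obtain ⟨h1, h2, h3, h4, h5⟩ := to_odd j (by omega) (ih (by omega))
      obtain ⟨e1, e2, e3, e4⟩ := even_step j
      -- The same division step with the roles of the two entries exchanged.
      obtain ⟨s1, s2⟩ := euclid_step q n (2 * j + 1) hj hq _ _ h4 h5
      have hqj := hq (2 * j + 2) (by omega) (by omega)
      have e : -X (2 * j + 1) 0 1 - q (2 * j + 1 + 1) * X (2 * j + 1) 1 1 =
          -X (2 * j + 2) 0 1 := by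
        rw [e2]; ring
      rw [e] at s1 s2
      rw [e3, e4]
      refine ⟨?_, h2.le, s1, h4, s2⟩
      rw [e1]; positivity
  refine ⟨fun j hj => ?_, fun j hj => ?_, fun j hj => ?_⟩
  · obtain ⟨h1, h2, h3, h4, -⟩ := to_odd j (by omega) (even_inv j (by omega))
    obtain ⟨e1, e2, -, -⟩ := odd_step j
    obtain ⟨f1, f2, -, -⟩ := even_step j
    have hqj := hq (2 * j + 2) (by omega) (by omega)
    have p1 := mul_pos hqj h2
    have p2 := mul_pos hqj h4
    exact ⟨e1.symm, by linarith, by rw [e2], by linarith⟩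
  · obtain ⟨h1, h2, h3, h4, -⟩ := even_inv j (by omega)
    obtain ⟨-, -, e3, e4⟩ := odd_step j
    have hqj := hq (2 * j + 1) (by omega) (by omega)
    have p1 := mul_pos hqj h1
    have p2 := mul_pos hqj h3
    exact ⟨by linarith, by linarith⟩
  · obtain ⟨-, -, f3, f4⟩ := even_step j
    exact ⟨f3.symm, f4.symm⟩
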